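/- arXiv:1706.05642 — 4 statements merged into one kernel-verified Lean document; each statement's English description precedes it below -/
import Mathlib

section
/- Let H be a fixed graph with chromatic number χ(H) = k. For every real c > 0 there exists n₀ (depending on H and c) such that every H-free graph G on n > n₀ vertices can be made K_k-free by deleting at most c·n² of its edges; that is, there is a set of at most c·n² edges of G whose removal yields a graph containing no subgraph isomorphic to the complete graph K_k. -/
/-!
The proof is the regularity method. Apply Szemerédi's regularity lemma with a tiny uniformity
parameter `η` and delete every edge of `G` that lies inside a part, in a non-uniform pair, or in a
sparse pair; this costs at most `c n²` edges (`card_unreduced_le`). If the remaining graph had a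
copy of `K_k`, its vertices would lie in `k` parts that are pairwise `η`-uniform and dense. A proper
`k`-colouring of `H` then assigns a part to each vertex of `H`, adjacent vertices going to dense
uniform pairs, and `H` can be embedded greedily (`exists_embedding_of_uniform`): one embeds the
vertices one at a time, keeping for each remaining vertex a candidate set which shrinks only by a
constant factor at each step. This contradicts `H`-freeness.
-/

open SimpleGraph

/-- `G` is `H`-free: no subgraph of `G` is isomorphic to `H`. -/
def HFree {V W : Type*} (G : SimpleGraph V) (H : SimpleGraph W) : Prop :=
  ∀ F : G.Subgraph, ¬ Nonempty (F.coe ≃g H)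

open Finset in
/-- In a uniform pair of density at least `η + δ`, given a not too small subset `T` of the second
part, only few vertices of the first part have fewer than `δ * #T` neighbours in `T`. -/
lemma card_few_neighbors_lt {V : Type*} [DecidableEq V] (G : SimpleGraph V) [DecidableRel G.Adj]
    {A A' S T : Finset V} {η δ : ℝ} (hδ : 0 ≤ δ) (hu : G.IsUniform η A A')
    (hd : η + δ ≤ G.edgeDensity A A') (hS : S ⊆ A) (hT : T ⊆ A') (hTc : #A' * η ≤ (#T : ℝ)) :
    (#{v ∈ S | (#{u ∈ T | G.Adj v u} : ℝ) < δ * #T} : ℝ) ≤ #A * η := by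
  set X := {v ∈ S | (#{u ∈ T | G.Adj v u} : ℝ) < δ * #T} with hX
  by_contra! hlt
  have h1 := hu ((filter_subset _ _).trans hS : X ⊆ A) hT hlt.le hTc
  have h2 : (G.edgeDensity X T : ℝ) ≤ δ := by
    rw [SimpleGraph.edgeDensity_def]
    push_cast
    refine div_le_of_le_mul₀ (by positivity) hδ ?_
    have h3 : (#(G.interedges X T) : ℝ) ≤ ∑ v ∈ X, (#{u ∈ T | G.Adj v u} : ℝ) := by
      refine (Nat.cast_le.2 <| (card_le_card <| subset_of_eq
        (Rel.interedges_eq_biUnion _)).trans card_biUnion_le).trans ?_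
      simp
    refine h3.trans ((sum_le_card_nsmul X _ (δ * #T) fun v hv => ?_).trans ?_)
    · exact (mem_filter.1 hv).2.le
    · rw [nsmul_eq_mul]; apply le_of_eq; ring
  rw [abs_sub_lt_iff] at h1
  linarith

open Finset in
/-- Greedy embedding. If each vertex `w` of `H` has a set `A w` of vertices of `G`, with dense
uniform pairs for the edges of `H`, then `H` restricted to `s` embeds into `G` with each `w ∈ s`
going to a prescribed candidate set `B w` that occupies a proportion at least `β` of `A w`.
In the induction, `β` drops by a factor `γ` for each embedded vertex. -/
lemma exists_embedding_of_uniform {V W : Type*} [DecidableEq V] [Nonempty V] [Fintype W]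
    (G : SimpleGraph V) [DecidableRel G.Adj] (H : SimpleGraph W) (A : W → Finset V)
    {η γ M : ℝ} (hη : 0 < η) (hγ : 0 < γ) (hγ' : γ ≤ 1 / 2)
    (hu : ∀ w w', H.Adj w w' → G.IsUniform η (A w) (A w'))
    (hd : ∀ w w', H.Adj w w' → η + 2 * γ ≤ G.edgeDensity (A w) (A w'))
    (hM : ∀ w, M ≤ #(A w)) (s : Finset W) :
    ∀ (β : ℝ) (B : W → Finset V), 0 < β → (Fintype.card W + 1) * η ≤ β * γ ^ #s →
      1 ≤ β * γ ^ #s * M → (∀ w ∈ s, B w ⊆ A w ∧ β * #(A w) ≤ #(B w)) →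
      ∃ f : W → V, (∀ w ∈ s, f w ∈ B w) ∧ Set.InjOn f s ∧
        ∀ w ∈ s, ∀ w' ∈ s, H.Adj w w' → G.Adj (f w) (f w') := by
  classical
  induction s using Finset.induction_on with
  | empty => intro β B _ _ _ _; exact ⟨fun _ => Classical.arbitrary V, by simp⟩
  | insert w s hw ih =>
    intro β B hβ h1 h2 hB
    rw [card_insert_of_notMem hw] at h1 h2
    have hγs : γ ^ #s ≤ 1 := pow_le_one₀ hγ.le (by linarith)
    have hp : β * γ ^ (#s + 1) ≤ β * γ := by
      rw [pow_succ]; nlinarith [mul_pos hβ hγ]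
    have hηβ : (Fintype.card W + 1) * η ≤ β := by nlinarith
    have hηβ' : η ≤ β := by
      have : (0 : ℝ) ≤ Fintype.card W * η := by positivity
      linarith
    have hM0 : 0 < M := by
      by_contra! h
      have : β * γ ^ (#s + 1) * M ≤ 0 := mul_nonpos_of_nonneg_of_nonpos (by positivity) h
      linarith
    have hbig : ∀ u, 1 ≤ β * γ * #(A u) := fun u => by
      calc (1 : ℝ) ≤ β * γ ^ (#s + 1) * M := h2
        _ ≤ β * γ * #(A u) := by gcongr; exact hM u
    let N : W → V → Finset V := fun u v => {x ∈ B u | G.Adj v x}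
    let bad : W → Finset V := fun u => {v ∈ B w | (#(N u v) : ℝ) < 2 * γ * #(B u)}
    -- Every neighbour of `w` rules out at most `η * #(A w)` choices, fewer than `#(B w)` in total.
    have hbad : ∀ u ∈ s.filter (H.Adj w), (#(bad u) : ℝ) ≤ #(A w) * η := by
      intro u hu'
      obtain ⟨hus, hadj⟩ := mem_filter.1 hu'
      obtain ⟨hBu, hBc⟩ := hB u (mem_insert_of_mem hus)
      refine card_few_neighbors_lt G (by positivity) (hu w u hadj) (hd w u hadj)
        (hB w (mem_insert_self _ _)).1 hBu (le_trans ?_ hBc)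
      rw [mul_comm]; gcongr
    obtain ⟨v, hvB, hv⟩ : ∃ v ∈ B w, v ∉ (s.filter (H.Adj w)).biUnion bad := by
      apply exists_mem_notMem_of_card_lt_card
      have e1 : (#((s.filter (H.Adj w)).biUnion bad) : ℝ) ≤ Fintype.card W * (#(A w) * η) := by
        calc _ ≤ ∑ u ∈ s.filter (H.Adj w), (#(bad u) : ℝ) := mod_cast card_biUnion_le
          _ ≤ #(s.filter (H.Adj w)) • (#(A w) * η) := sum_le_card_nsmul _ _ _ hbad
          _ ≤ _ := by rw [nsmul_eq_mul]; gcongr; exact card_le_univ _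
      have hA : (0 : ℝ) < #(A w) := hM0.trans_le (hM w)
      have e2 := (hB w (mem_insert_self _ _)).2
      have e3 : (#(A w) : ℝ) * ((Fintype.card W + 1) * η) ≤ #(A w) * β := by gcongr
      have e4 := mul_pos hA hη
      have : (#((s.filter (H.Adj w)).biUnion bad) : ℝ) < #(B w) := by nlinarith
      exact_mod_cast this
    let B' : W → Finset V := fun u => (if H.Adj w u then N u v else B u).erase v
    obtain ⟨f, hf1, hf2, hf3⟩ := ih (β * γ) B' (by positivity)
      (by rw [mul_assoc, ← pow_succ']; exact h1)
      (by rw [mul_assoc β, ← pow_succ']; exact h2) (by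
        intro u hus
        obtain ⟨hBu, hBc⟩ := hB u (mem_insert_of_mem hus)
        have hb := hbig u
        have key : 2 * γ * #(B u) ≤ (#(if H.Adj w u then N u v else B u) : ℝ) := by
          split_ifs with hadj
          · by_contra! hlt
            exact hv (mem_biUnion.2 ⟨u, mem_filter.2 ⟨hus, hadj⟩, mem_filter.2 ⟨hvB, hlt⟩⟩)
          · have : (0 : ℝ) ≤ #(B u) := by positivity
            nlinarith
        constructor
        · refine (erase_subset _ _).trans ?_
          split_ifs
          · exact (filter_subset _ _).trans hBu
          · exact hBu
        · have e1 : (#(if H.Adj w u then N u v else B u) : ℝ) ≤ #(B' u) + 1 := by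
            have := pred_card_le_card_erase
              (s := if H.Adj w u then N u v else B u) (a := v)
            exact_mod_cast Nat.sub_le_iff_le_add.1 this
          have e2 : γ * (β * #(A u)) ≤ γ * #(B u) := by gcongr
          nlinarith)
    have hne : ∀ u ∈ s, f u ≠ v := fun u hu' => (mem_erase.1 (hf1 u hu')).1
    have hmem : ∀ u ∈ s, f u ∈ if H.Adj w u then N u v else B u :=
      fun u hu' => (mem_erase.1 (hf1 u hu')).2
    have hws : ∀ u ∈ s, u ≠ w := fun u hu' h => hw (h ▸ hu')
    have hedge : ∀ u ∈ s, H.Adj w u → G.Adj v (f u) := by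
      intro u hu' hadj
      have := hmem u hu'
      rw [if_pos hadj] at this
      exact (mem_filter.1 this).2
    refine ⟨Function.update f w v, ?_, ?_, ?_⟩
    · intro u hu'
      rcases mem_insert.1 hu' with rfl | hus
      · simpa using hvB
      · rw [Function.update_of_ne (hws u hus)]
        have := hmem u hus
        split_ifs at this
        · exact (mem_filter.1 this).1
        · exact this
    · intro a ha b hb hab
      rcases mem_insert.1 (mem_coe.1 ha) with rfl | has <;>
        rcases mem_insert.1 (mem_coe.1 hb) with rfl | hbs
      · rfl
      · rw [Function.update_self, Function.update_of_ne (hws b hbs)] at hab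
        exact absurd hab.symm (hne b hbs)
      · rw [Function.update_self, Function.update_of_ne (hws a has)] at hab
        exact absurd hab (hne a has)
      · rw [Function.update_of_ne (hws a has), Function.update_of_ne (hws b hbs)] at hab
        exact hf2 has hbs hab
    · intro a ha b hb hab
      rcases mem_insert.1 ha with rfl | has <;> rcases mem_insert.1 hb with rfl | hbs
      · exact absurd hab (H.irrefl)
      · rw [Function.update_self, Function.update_of_ne (hws b hbs)]
        exact hedge b hbs hab
      · rw [Function.update_self, Function.update_of_ne (hws a has)]
        exact (hedge a has hab.symm).symm
      · rw [Function.update_of_ne (hws a has), Function.update_of_ne (hws b hbs)]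
        exact hf3 a has b hbs hab

open Finset in
/-- Few edges are lost when passing to the regularity-reduced graph. Unlike in
`SimpleGraph.regularityReduced_edges_card_aux`, the uniformity parameter `η` may be much smaller
than the density threshold `ε / 4`. -/
lemma card_unreduced_le {V : Type*} [Fintype V] [DecidableEq V] [Nonempty V]
    (G : SimpleGraph V) [DecidableRel G.Adj] {P : Finpartition (univ : Finset V)} {ε η : ℝ}
    (hε : 0 < ε) (hη : 0 < η) (hηε : η ≤ ε / 8) (hP : P.IsEquipartition)
    (hPη : P.IsUniform G η) (hP' : 4 / ε ≤ #P.parts) :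
    ((G.edgeSet \ (G.regularityReduced P η (ε / 4)).edgeSet).ncard : ℝ)
      ≤ 2 * ε * (Fintype.card V : ℝ) ^ 2 := by
  let A := (P.nonUniforms G η).biUnion fun (U, V) ↦ U ×ˢ V
  let B := P.parts.biUnion offDiag
  let C := (P.sparsePairs G (ε / 4)).biUnion fun (U, V) ↦ G.interedges U V
  have hsub : G.edgeSet \ (G.regularityReduced P η (ε / 4)).edgeSet ⊆
      (((A ∪ B ∪ C).image fun p => s(p.1, p.2) : Finset (Sym2 V)) : Set (Sym2 V)) := by
    intro e
    induction e using Sym2.ind with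
    | _ x y =>
    rintro ⟨hxy, hn⟩
    rw [SimpleGraph.mem_edgeSet] at hxy hn
    refine mem_coe.2 (mem_image.2 ⟨(x, y), ?_, rfl⟩)
    obtain ⟨U, hU, hx⟩ := P.exists_mem (mem_univ x)
    obtain ⟨U', hU', hy⟩ := P.exists_mem (mem_univ y)
    by_cases hUU : U = U'
    · subst hUU
      exact mem_union_left _ (mem_union_right _ (mem_biUnion.2
        ⟨U, hU, mem_offDiag.2 ⟨hx, hy, hxy.ne⟩⟩))
    by_cases hunif : G.IsUniform η U U'
    · refine mem_union_right _ (mem_biUnion.2 ⟨(U, U'), ?_, ?_⟩)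
      · refine (P.mk_mem_sparsePairs G U U' _).2 ⟨hU, hU', hUU, ?_⟩
        by_contra! hdens
        exact hn ⟨hxy, U, hU, U', hU', hx, hy, hUU, hunif, hdens⟩
      · exact SimpleGraph.mk_mem_interedges_iff _ |>.2 ⟨hx, hy, hxy⟩
    · refine mem_union_left _ (mem_union_left _ (mem_biUnion.2 ⟨(U, U'), ?_, ?_⟩))
      · exact (P.mk_mem_nonUniforms G).2 ⟨hU, hU', hUU, hunif⟩
      · exact mem_product.2 ⟨hx, hy⟩
  have h1 : (G.edgeSet \ (G.regularityReduced P η (ε / 4)).edgeSet).ncard ≤ #A + #B + #C := by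
    refine (Set.ncard_le_ncard hsub (finite_toSet _)).trans ?_
    rw [Set.ncard_coe_finset]
    exact card_image_le.trans ((card_union_le _ _).trans
      (Nat.add_le_add_right (card_union_le _ _) _))
  have hA : (#A : ℝ) < 4 * η * (#(univ : Finset V) : ℝ) ^ 2 :=
    hP.sum_nonUniforms_lt univ_nonempty hη hPη
  have hB : (#B : ℝ) ≤ ε / 2 * (#(univ : Finset V) : ℝ) ^ 2 := hP.card_biUnion_offDiag_le hε hP'
  have hC : (#C : ℝ) ≤ 4 * (ε / 4) * (#(univ : Finset V) : ℝ) ^ 2 :=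
    hP.card_interedges_sparsePairs_le (G := G) (ε := ε / 4) (by positivity)
  rw [card_univ] at hA hB hC
  have h2 : ((G.edgeSet \ (G.regularityReduced P η (ε / 4)).edgeSet).ncard : ℝ)
      ≤ #A + #B + #C := by exact_mod_cast h1
  have h3 : η * (Fintype.card V : ℝ) ^ 2 ≤ ε / 8 * (Fintype.card V : ℝ) ^ 2 := by gcongr
  nlinarith

lemma HFree_iff_free {V W : Type*} (G : SimpleGraph V) (H : SimpleGraph W) :
    HFree G H ↔ H.Free G := by
  rw [SimpleGraph.Free, SimpleGraph.isContained_iff_exists_iso_subgraph, not_exists]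
  exact forall_congr' fun F => not_congr ⟨fun ⟨e⟩ => ⟨e.symm⟩, fun ⟨e⟩ => ⟨e.symm⟩⟩

/-- Let `H` be a graph with `χ(H) = k`. For every `c > 0` there is `n₀` such that every
`H`-free graph on `n > n₀` vertices can be made `K_k`-free by deleting at most `c n²` edges. -/
theorem Hfree_almost_Kk_free {W : Type} [Fintype W] (H : SimpleGraph W) (k : ℕ)
    (hchr : H.chromaticNumber = k) :
    ∀ c : ℝ, 0 < c → ∃ n₀ : ℕ, ∀ n : ℕ, n₀ < n → ∀ G : SimpleGraph (Fin n), HFree G H →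
      ∃ S : Set (Sym2 (Fin n)), S ⊆ G.edgeSet ∧ (S.ncard : ℝ) ≤ c * n ^ 2 ∧
        HFree (G.deleteEdges S) (completeGraph (Fin k)) := by
  classical
  intro c hc
  obtain ⟨col⟩ : H.Colorable k := SimpleGraph.chromaticNumber_le_iff_colorable.1 hchr.le
  set h := Fintype.card W with hh
  set ε : ℝ := min (c / 2) 1 with hεdef
  have hε : 0 < ε := by positivity
  have hε1 : ε ≤ 1 := min_le_right _ _
  have hεc : ε ≤ c / 2 := min_le_left _ _
  -- `γ` is the shrinking factor of candidate sets; the density threshold `ε / 4` is `4 * γ`.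
  obtain ⟨γ, hγdef⟩ : ∃ γ : ℝ, γ = ε / 16 := ⟨_, rfl⟩
  have hγ : 0 < γ := by linarith
  have hγ1 : γ ≤ 1 := by linarith
  -- `η` is small enough for `h` greedy steps, each using up a factor `γ`.
  obtain ⟨η, hηdef⟩ : ∃ η : ℝ, η = γ ^ (h + 1) / (h + 1) := ⟨_, rfl⟩
  have hη : 0 < η := by rw [hηdef]; positivity
  have hη' : (h + 1) * η = γ ^ (h + 1) := by rw [hηdef]; field_simp
  have hp1 : γ ^ (h + 1) ≤ γ ^ h := pow_le_pow_of_le_one hγ.le hγ1 (Nat.le_succ h)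
  have hp2 : γ ^ (h + 1) ≤ γ := by
    simpa using pow_le_pow_of_le_one hγ.le hγ1 (Nat.le_add_left 1 h)
  have hηγ : η ≤ γ := by
    have : (0 : ℝ) ≤ h * η := by positivity
    linarith
  let l : ℕ := ⌈4 / ε⌉₊
  let b := SzemerediRegularity.bound η l
  -- Parts will have at least `m` vertices, so that no candidate set is exhausted.
  let m : ℕ := ⌈(γ ^ h)⁻¹⌉₊
  refine ⟨max l (b * m), fun n hn G hG => ?_⟩
  have hnl : l ≤ n := (le_max_left _ _).trans hn.le
  have hnb : b * m ≤ n := (le_max_right _ _).trans hn.le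
  have hn0 : 0 < n := by omega
  have : Nonempty (Fin n) := ⟨⟨0, hn0⟩⟩
  obtain ⟨P, hP1, hP2, hP3, hP4⟩ := szemeredi_regularity G hη
    (l := l) (by simpa using hnl)
  have hl : 4 / ε ≤ (P.parts.card : ℝ) := (Nat.le_ceil _).trans (by exact_mod_cast hP2)
  set R := G.regularityReduced P η (ε / 4) with hR
  refine ⟨G.edgeSet \ R.edgeSet, Set.sdiff_subset, ?_, ?_⟩
  · have := card_unreduced_le G hε hη (by linarith) hP1 hP4 hl
    rw [Fintype.card_fin] at this
    refine this.trans ?_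
    gcongr
    linarith
  rw [HFree_iff_free] at hG ⊢
  rintro ⟨g⟩
  apply hG
  have hRadj : ∀ i j : Fin k, i ≠ j → R.Adj (g i) (g j) := by
    intro i j hij
    have := g.toHom.map_adj (show (completeGraph (Fin k)).Adj i j from hij)
    rw [SimpleGraph.deleteEdges_adj] at this
    obtain ⟨h1, h2⟩ := this
    by_contra hcon
    exact h2 ⟨h1, hcon⟩
  have hpart : ∀ i j : Fin k, i ≠ j → G.IsUniform η (P.part (g i)) (P.part (g j)) ∧
      ε / 4 ≤ G.edgeDensity (P.part (g i)) (P.part (g j)) := by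
    intro i j hij
    obtain ⟨-, U, hU, U', hU', hx, hy, -, hu, hd⟩ := hRadj i j hij
    rw [P.part_eq_of_mem hU hx, P.part_eq_of_mem hU' hy]
    exact ⟨hu, hd⟩
  have hsize : ∀ w, (m : ℝ) ≤ (P.part (g (col w))).card := by
    intro w
    have h1 := hP1.average_le_card_part (P.part_mem.2 (Finset.mem_univ (g (col w))))
    rw [Finset.card_univ, Fintype.card_fin] at h1
    refine Nat.cast_le.2 (le_trans ?_ h1)
    have hpos : 0 < P.parts.card :=
      Finset.card_pos.2 ⟨_, P.part_mem.2 (Finset.mem_univ (g (col w)))⟩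
    rw [Nat.le_div_iff_mul_le hpos, mul_comm]
    exact (Nat.mul_le_mul_right m hP3).trans hnb
  obtain ⟨f, -, hf2, hf3⟩ := exists_embedding_of_uniform G H (fun w => P.part (g (col w)))
    hη hγ (by linarith) (M := m)
    (fun w w' hw => (hpart _ _ (col.valid hw)).1)
    (fun w w' hw => le_trans (by linarith) (hpart _ _ (col.valid hw)).2)
    hsize Finset.univ 1 (fun w => P.part (g (col w))) one_pos
    (by rw [Finset.card_univ, one_mul]; linarith)
    (by
      rw [Finset.card_univ, one_mul]
      calc (1 : ℝ) = γ ^ h * (γ ^ h)⁻¹ := (mul_inv_cancel₀ (by positivity)).symm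
        _ ≤ γ ^ h * m := by gcongr; exact Nat.le_ceil _)
    (fun w _ => ⟨subset_rfl, by rw [one_mul]⟩)
  exact ⟨⟨⟨f, fun {a b} hab => hf3 a (Finset.mem_univ a) b (Finset.mem_univ b) hab⟩,
    fun a b hab => hf2 (by simp) (by simp) hab⟩⟩
end

section
/- Let H be a fixed graph with chromatic number χ(H) = k. For every real c > 0 there exists n₀ (depending on H and c) such that every H-free graph G on n > n₀ vertices contains at most c·n^k copies of the complete graph K_k; that is, N(G, K_k) ≤ c·n^k. -/
/-!
The proof is Erdős's argument for complete `k`-partite `k`-uniform hypergraphs. The ordered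
`k`-cliques of `G` form a set `S` of `k`-tuples of vertices, and `CopyCount` is at most `|S|`.
If `|S| ≥ c n ^ k` with `n` large, then `exists_box` finds `k` injective families of
`t = |W|` vertices such that every transversal lies in `S`, i.e. a complete `k`-partite subgraph of
`G` with `t` vertices in each part; since `H` has a `k`-colouring, it embeds there.

`exists_box` goes by induction on `k`. In the step, `exists_dense_link` double counts pairs of a
`k`-tuple `x` and an injective `t`-tuple of possible first coordinates `v` with `(v, x) ∈ S`:
a positive proportion of the `x` have linearly many extensions, so some injective `t`-tuple is
compatible with a positive proportion of all `x`, and the induction hypothesis applies to these.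
-/

open SimpleGraph

/-- The number of copies of `T` in `G`: the number of subgraphs of `G` isomorphic to `T`. -/
noncomputable def CopyCount {V W : Type*} (G : SimpleGraph V) (T : SimpleGraph W) : ℕ :=
  Set.ncard {F : G.Subgraph | Nonempty (F.coe ≃g T)}

/-- If a positive proportion of the pairs `(v, x)` satisfies `R`, then for `V` large there are `t`
distinct elements of `V` that are simultaneously related to a positive proportion of all `x`.
The proportion `(c / 4) ^ (t + 1)` does not depend on `V` or `X`. -/
lemma exists_dense_link {V X : Type} [Fintype V] [Fintype X] (R : V → X → Prop)
    (t : ℕ) (c : ℝ) (hc : 0 < c) (hV : 4 * t / c < Fintype.card V) (hX : 0 < Fintype.card X)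
    (h : c * (Fintype.card V * Fintype.card X) ≤ (Nat.card {p : V × X // R p.1 p.2} : ℝ)) :
    ∃ A : Fin t ↪ V, (c / 4) ^ (t + 1) * Fintype.card X ≤
      (Nat.card {x : X // ∀ i, R (A i) x} : ℝ) := by
  classical
  set n : ℝ := (Fintype.card V : ℝ) with hn
  set m : ℝ := (Fintype.card X : ℝ) with hm
  have hn0 : 0 < n := lt_of_le_of_lt (by positivity) hV
  have hm0 : 0 < m := Nat.cast_pos.mpr hX
  let d : X → ℕ := fun x => Nat.card {v : V // R v x}
  have hd : ∀ x, (d x : ℝ) ≤ n := fun x => by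
    have : d x ≤ Nat.card V := Nat.card_le_card_of_injective _ Subtype.val_injective
    rw [Nat.card_eq_fintype_card] at this
    exact Nat.cast_le.mpr this
  have hsum : c * (n * m) ≤ ∑ x, (d x : ℝ) := by
    refine h.trans (le_of_eq ?_)
    let e : {p : V × X // R p.1 p.2} ≃ Σ x : X, {v : V // R v x} :=
      ⟨fun p => ⟨p.1.2, p.1.1, p.2⟩, fun q => ⟨(q.2.1, q.1), q.2.2⟩, fun _ => rfl, fun _ => rfl⟩
    rw [Nat.card_congr e, Nat.card_sigma]
    push_cast
    rfl
  -- The tuples `x` with at least half the average number of extensions.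
  let P : Finset X := Finset.univ.filter fun x => c * n / 2 ≤ d x
  have hP : c / 2 * m ≤ (P.card : ℝ) := by
    have h1 : ∑ x, (d x : ℝ) ≤ ∑ x : X, ((if x ∈ P then n else 0) + c * n / 2) := by
      refine Finset.sum_le_sum fun x _ => ?_
      split_ifs with hx
      · have := hd x
        have : 0 < c * n := by positivity
        linarith
      · have : ¬ c * n / 2 ≤ d x := by simpa [P] using hx
        linarith
    rw [Finset.sum_add_distrib, ← Finset.sum_filter, Finset.sum_const, Finset.sum_const] at h1
    simp only [Finset.filter_univ_mem, nsmul_eq_mul, Finset.card_univ, ← hm] at h1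
    have h2 : c / 2 * m * n ≤ P.card * n := by nlinarith
    exact le_of_mul_le_mul_right h2 hn0
  have hemb : ∀ x ∈ P, (c * n / 4) ^ t ≤
      (Nat.card {A : Fin t ↪ V // ∀ i, R (A i) x} : ℝ) := by
    intro x hx
    have hx : c * n / 2 ≤ d x := by simpa [P] using hx
    let e : (Fin t ↪ {v : V // R v x}) ≃ {A : Fin t ↪ V // ∀ i, R (A i) x} :=
      ⟨fun A => ⟨A.trans (Function.Embedding.subtype _), fun i => (A i).2⟩,
       fun A => ⟨fun i => ⟨A.1 i, A.2 i⟩, fun i j hij => A.1.injective (by simpa using hij)⟩,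
       fun _ => rfl, fun _ => rfl⟩
    have hcard : Nat.card {A : Fin t ↪ V // ∀ i, R (A i) x} = (d x).descFactorial t := by
      rw [← Nat.card_congr e, Nat.card_eq_fintype_card, Fintype.card_embedding_eq,
        Fintype.card_fin, ← Nat.card_eq_fintype_card]
    rw [hcard]
    have h4 : 4 * (t : ℝ) < n * c := by rwa [div_lt_iff₀ hc] at hV
    have h3 : t ≤ d x + 1 := by
      have : (t : ℝ) ≤ d x + 1 := by
        have : (0 : ℝ) ≤ t := by positivity
        linarith
      exact_mod_cast this
    calc (c * n / 4) ^ t ≤ ((d x + 1 - t : ℕ) : ℝ) ^ t := by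
          gcongr
          push_cast [Nat.cast_sub h3]
          linarith
      _ ≤ ((d x).descFactorial t : ℝ) := by exact_mod_cast Nat.pow_sub_le_descFactorial _ _
  by_contra! hcon
  have hswap : ∑ x : X, (Nat.card {A : Fin t ↪ V // ∀ i, R (A i) x} : ℝ) =
      ∑ A : Fin t ↪ V, (Nat.card {x : X // ∀ i, R (A i) x} : ℝ) := by
    let e : (Σ x : X, {A : Fin t ↪ V // ∀ i, R (A i) x}) ≃
        Σ A : Fin t ↪ V, {x : X // ∀ i, R (A i) x} :=
      ⟨fun q => ⟨q.2.1, q.1, q.2.2⟩, fun q => ⟨q.2.1, q.1, q.2.2⟩, fun _ => rfl, fun _ => rfl⟩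
    have := Nat.card_congr e
    rw [Nat.card_sigma, Nat.card_sigma] at this
    exact_mod_cast this
  have hlow : c / 2 * m * (c * n / 4) ^ t ≤
      ∑ x : X, (Nat.card {A : Fin t ↪ V // ∀ i, R (A i) x} : ℝ) :=
    calc c / 2 * m * (c * n / 4) ^ t ≤ P.card * (c * n / 4) ^ t := by gcongr
      _ = ∑ x ∈ P, (c * n / 4) ^ t := by simp
      _ ≤ ∑ x ∈ P, (Nat.card {A : Fin t ↪ V // ∀ i, R (A i) x} : ℝ) := Finset.sum_le_sum hemb
      _ ≤ _ := Finset.sum_le_sum_of_subset_of_nonneg (Finset.subset_univ _)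
        fun _ _ _ => by positivity
  have hup : ∑ A : Fin t ↪ V, (Nat.card {x : X // ∀ i, R (A i) x} : ℝ) ≤
      n ^ t * ((c / 4) ^ (t + 1) * m) :=
    calc _ ≤ ∑ A : Fin t ↪ V, (c / 4) ^ (t + 1) * m := Finset.sum_le_sum fun A _ => (hcon A).le
      _ = (Fintype.card (Fin t ↪ V) : ℝ) * ((c / 4) ^ (t + 1) * m) := by simp
      _ ≤ _ := by
        gcongr
        rw [Fintype.card_embedding_eq, Fintype.card_fin, hn]
        exact_mod_cast Nat.descFactorial_le_pow _ _
  have hlt : n ^ t * ((c / 4) ^ (t + 1) * m) < c / 2 * m * (c * n / 4) ^ t := by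
    have e1 : n ^ t * ((c / 4) ^ (t + 1) * m) = (c / 4 * m) * (c * n / 4) ^ t := by
      rw [show c * n / 4 = n * (c / 4) by ring, mul_pow]
      ring
    rw [e1]
    gcongr
    linarith
  linarith

/-- A set of `k`-tuples of positive density over a large `V` contains a box `A 0 × ⋯ × A (k - 1)`
whose sides are sets of `t` distinct elements. -/
lemma exists_box (t k : ℕ) : ∀ c : ℝ, 0 < c → ∃ n₀ : ℕ, ∀ (V : Type) [Fintype V],
    n₀ < Fintype.card V → ∀ S : Set (Fin k → V),
      c * (Fintype.card V : ℝ) ^ k ≤ (Nat.card S : ℝ) →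
      ∃ A : Fin k → Fin t ↪ V, ∀ f : Fin k → Fin t, (fun i => A i (f i)) ∈ S := by
  induction k with
  | zero =>
    refine fun c hc => ⟨0, fun V _ _ S hS => ⟨fun i => i.elim0, fun f => ?_⟩⟩
    have h0 : (0 : ℝ) < Nat.card S := lt_of_lt_of_le (by simpa using hc) hS
    have h1 : 0 < Nat.card S := by exact_mod_cast h0
    obtain ⟨⟨x, hx⟩⟩ := (Nat.card_pos_iff.mp h1).1
    convert hx
  | succ k ih =>
    intro c hc
    obtain ⟨n₁, h₁⟩ := ih ((c / 4) ^ (t + 1)) (by positivity)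
    refine ⟨max n₁ ⌈4 * t / c⌉₊, fun V _ hV S hS => ?_⟩
    have hV1 : n₁ < Fintype.card V := (le_max_left _ _).trans_lt hV
    have hV2 : 4 * t / c < Fintype.card V := (Nat.le_ceil _).trans_lt
      (by exact_mod_cast (le_max_right _ _).trans_lt hV)
    have hVpos : 0 < Fintype.card V := (Nat.zero_le _).trans_lt hV
    let e : S ≃ {p : V × (Fin k → V) // (Fin.cons p.1 p.2 : Fin (k + 1) → V) ∈ S} :=
      ((Fin.consEquiv fun _ => V).subtypeEquiv fun p => Iff.rfl).symm
    obtain ⟨a, ha⟩ := exists_dense_link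
      (fun (v : V) (x : Fin k → V) => (Fin.cons v x : Fin (k + 1) → V) ∈ S) t c hc hV2
      (by simpa using pow_pos hVpos k) (by
        rw [← Nat.card_congr e]
        refine le_trans (le_of_eq ?_) hS
        simp [pow_succ'])
    obtain ⟨A, hA⟩ := h₁ V hV1 {x | ∀ i, (Fin.cons (a i) x : Fin (k + 1) → V) ∈ S}
      (by
        rw [Fintype.card_fun, Fintype.card_fin, Nat.cast_pow] at ha
        exact ha)
    refine ⟨Fin.cons a A, fun f => ?_⟩
    have := hA (fun i => f i.succ) (f 0)
    convert this using 1
    funext i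
    refine Fin.cases ?_ (fun j => ?_) i <;> simp

/-- Choosing an ordering of each clique, there are at most as many copies of `K_k` as ordered
`k`-cliques. -/
lemma copyCount_le_card_cliqueTuples {V : Type} [Fintype V] (G : SimpleGraph V) (k : ℕ) :
    CopyCount G (completeGraph (Fin k)) ≤
      Nat.card {f : Fin k → V | ∀ i j, i ≠ j → G.Adj (f i) (f j)} := by
  classical
  have hsurj : ∀ F : {F : G.Subgraph | Nonempty (F.coe ≃g completeGraph (Fin k))},
      ∃ f : {f : Fin k → V | ∀ i j, i ≠ j → G.Adj (f i) (f j)},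
        F.1.verts = Set.range f.1 ∧ ∀ u v, F.1.Adj u v ↔ u ∈ Set.range f.1 ∧
          v ∈ Set.range f.1 ∧ u ≠ v := by
    rintro ⟨F, ⟨e⟩⟩
    have hr : F.verts = Set.range (fun i => (e.symm i : V)) := by
      ext v
      constructor
      · exact fun hv => ⟨e ⟨v, hv⟩, by simp⟩
      · rintro ⟨i, rfl⟩
        exact (e.symm i).2
    refine ⟨⟨fun i => (e.symm i : V), fun i j hij => ?_⟩, hr, fun u v => ?_⟩
    · have : F.coe.Adj (e.symm i) (e.symm j) := e.symm.map_adj_iff.mpr hij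
      exact F.adj_sub this
    · simp only [← hr]
      refine ⟨fun h => ⟨F.edge_vert h, F.edge_vert h.symm, h.ne⟩, fun ⟨hu, hv, huv⟩ => ?_⟩
      have : F.coe.Adj ⟨u, hu⟩ ⟨v, hv⟩ := by
        rw [← e.map_adj_iff]
        exact fun h => huv (by simpa using e.injective h)
      exact this
  choose g hg1 hg2 using hsurj
  rw [CopyCount, ← Nat.card_coe_set_eq]
  refine Nat.card_le_card_of_injective g fun F F' h => Subtype.ext (Subgraph.ext ?_ ?_)
  · rw [hg1, hg1, h]
  · funext u v
    rw [eq_iff_iff, hg2, hg2, h]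

/-- Let `H` be a graph with `χ(H) = k`. For every `c > 0` there is `n₀` such that every
`H`-free graph on `n > n₀` vertices contains at most `c n^k` copies of `K_k`. -/
theorem Hfree_few_Kk_copies {W : Type} [Fintype W] (H : SimpleGraph W) (k : ℕ)
    (hchr : H.chromaticNumber = k) :
    ∀ c : ℝ, 0 < c → ∃ n₀ : ℕ, ∀ n : ℕ, n₀ < n → ∀ G : SimpleGraph (Fin n), HFree G H →
      (CopyCount G (completeGraph (Fin k)) : ℝ) ≤ c * (n : ℝ) ^ k := by
  intro c hc
  obtain ⟨n₀, h₀⟩ := exists_box (Fintype.card W) k c hc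
  refine ⟨n₀, fun n hn G hG => ?_⟩
  by_contra! hcon
  obtain ⟨A, hA⟩ := h₀ (Fin n) (by simpa using hn)
    {f | ∀ i j, i ≠ j → G.Adj (f i) (f j)} (by
      rw [Fintype.card_fin]
      exact hcon.le.trans (by exact_mod_cast copyCount_le_card_cliqueTuples G k))
  -- Vertices in different parts of the box are adjacent: extend them to a transversal.
  have hadj : ∀ i j, i ≠ j → ∀ a b, G.Adj (A i a) (A j b) := fun i j hij a b => by
    have := hA (Function.update (fun _ => a) j b) i j hij
    simpa [Function.update_of_ne hij] using this
  obtain ⟨C⟩ : H.Colorable k := chromaticNumber_le_iff_colorable.mp hchr.le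
  let e := Fintype.equivFin W
  let φ : Copy H G := ⟨⟨fun w => A (C w) (e w), fun h => hadj _ _ (C.valid h) _ _⟩, by
    intro w w' hw
    change A (C w) (e w) = A (C w') (e w') at hw
    by_cases hC : C w = C w'
    · rw [hC] at hw
      exact e.injective ((A (C w')).injective hw)
    · exact absurd hw (hadj _ _ hC _ _).ne⟩
  exact hG φ.toSubgraph ⟨φ.isoToSubgraph.symm⟩
end

section
/- Let m ≥ 2, t ≥ 1 and n be integers with n ≥ m·t, and let n₁, …, n_m be nonnegative integers with n₁ + ⋯ + n_m = n. Write n = q·m + r with 0 ≤ r < m. Then ∏_{i=1}^m C(n_i, t) ≤ C(q+1, t)^r · C(q, t)^{m−r}; that is, among all complete multipartite graphs on n vertices with at most m parts, the Turán graph T_m(n) (the complete m-partite graph with parts of sizes as equal as possible) maximizes the number of copies of K_m(t). -/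
/-!
The sequence `k ↦ C(k, t)` is log-concave, so with `a = C(q, t)` and `b = C(q + 1, t)` it lies
below the geometric sequence through its values at `q` and `q + 1`: `C(k, t) ≤ a (b / a) ^ (k - q)`
for every `k` (the "tangent line" of its logarithm). Multiplying these bounds over the parts
gives `∏ C(nᵢ, t) ≤ a ^ m (b / a) ^ (n - q m) = b ^ r a ^ (m - r)`. The argument is carried out in
`ℕ` with denominators cleared; the final cancellation uses `a, b > 0`, that is `t ≤ q`, which
follows from `m t ≤ n`.
-/

/-- Log-concavity of `k ↦ C(k, t)`, in the form that the ratio `C(k + 1, t) / C(k, t)` decreases. -/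
lemma choose_mul_choose_succ_le {t i j : ℕ} (hij : i ≤ j) :
    i.choose t * (j + 1).choose t ≤ (i + 1).choose t * j.choose t := by
  rcases lt_or_ge i t with h | h
  · simp [Nat.choose_eq_zero_of_lt h]
  obtain ⟨u, rfl⟩ := Nat.exists_eq_add_of_le h
  obtain ⟨v, rfl⟩ := Nat.exists_eq_add_of_le hij
  have h1 := Nat.choose_mul_succ_eq (t + u) t
  have h2 := Nat.choose_mul_succ_eq (t + u + v) t
  rw [show t + u + 1 - t = u + 1 by omega] at h1
  rw [show t + u + v + 1 - t = u + v + 1 by omega] at h2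
  refine Nat.le_of_mul_le_mul_right (c := (u + 1) * (u + v + 1)) ?_ (by positivity)
  calc (t + u).choose t * (t + u + v + 1).choose t * ((u + 1) * (u + v + 1))
      = (t + u).choose t * ((t + u + v + 1).choose t * (u + v + 1)) * (u + 1) := by ring
    _ = (t + u).choose t * (t + u + v).choose t * ((t + u + v + 1) * (u + 1)) := by
        rw [← h2]; ring
    _ ≤ (t + u).choose t * (t + u + v).choose t * ((t + u + 1) * (u + v + 1)) := by
        refine Nat.mul_le_mul_left _ ?_
        nlinarith [Nat.zero_le (t * v)]
    _ = ((t + u).choose t * (t + u + 1)) * (t + u + v).choose t * (u + v + 1) := by ring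
    _ = (t + u + 1).choose t * (t + u + v).choose t * ((u + 1) * (u + v + 1)) := by
        rw [h1]; ring

lemma choose_add_mul_pow_le (t q j : ℕ) :
    (q + j).choose t * q.choose t ^ j ≤ q.choose t * (q + 1).choose t ^ j := by
  induction j with
  | zero => simp
  | succ j ih =>
    calc (q + (j + 1)).choose t * q.choose t ^ (j + 1)
        = (q.choose t * (q + j + 1).choose t) * q.choose t ^ j := by
          rw [← add_assoc]; ring
      _ ≤ ((q + 1).choose t * (q + j).choose t) * q.choose t ^ j :=
          Nat.mul_le_mul_right _ (choose_mul_choose_succ_le (Nat.le_add_right q j))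
      _ = (q + 1).choose t * ((q + j).choose t * q.choose t ^ j) := by ring
      _ ≤ (q + 1).choose t * (q.choose t * (q + 1).choose t ^ j) := Nat.mul_le_mul_left _ ih
      _ = _ := by ring

lemma choose_mul_pow_le_of_add_eq {t q : ℕ} (j : ℕ) : ∀ k, k + j = q →
    k.choose t * (q + 1).choose t ^ j ≤ q.choose t * q.choose t ^ j := by
  induction j with
  | zero => rintro k rfl; simp
  | succ j ih =>
    intro k hk
    calc k.choose t * (q + 1).choose t ^ (j + 1)
        = (k.choose t * (q + 1).choose t) * (q + 1).choose t ^ j := by ring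
      _ ≤ ((k + 1).choose t * q.choose t) * (q + 1).choose t ^ j :=
          Nat.mul_le_mul_right _ (choose_mul_choose_succ_le (by omega))
      _ = q.choose t * ((k + 1).choose t * (q + 1).choose t ^ j) := by ring
      _ ≤ q.choose t * (q.choose t * q.choose t ^ j) :=
          Nat.mul_le_mul_left _ (ih (k + 1) (by omega))
      _ = _ := by ring

/-- The tangent bound `C(k, t) ≤ a (b / a) ^ (k - q)` with `a = C(q, t)`, `b = C(q + 1, t)`, after
clearing denominators. -/
lemma choose_tangent_bound (t q k : ℕ) :
    k.choose t * (q.choose t ^ k * (q + 1).choose t ^ q) ≤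
      q.choose t * ((q + 1).choose t ^ k * q.choose t ^ q) := by
  rcases le_total q k with h | h
  · obtain ⟨j, rfl⟩ := Nat.exists_eq_add_of_le h
    calc _ = ((q + j).choose t * q.choose t ^ j) * (q.choose t ^ q * (q + 1).choose t ^ q) := by
          ring
      _ ≤ _ := Nat.mul_le_mul_right _ (choose_add_mul_pow_le t q j)
      _ = _ := by ring
  · obtain ⟨j, hj⟩ := Nat.exists_eq_add_of_le h
    have key := choose_mul_pow_le_of_add_eq (t := t) j k hj.symm
    generalize (q + 1).choose t = b at *
    generalize q.choose t = a at *
    subst hj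
    calc _ = (k.choose t * b ^ j) * (a ^ k * b ^ k) := by ring
      _ ≤ _ := Nat.mul_le_mul_right _ key
      _ = _ := by ring

/-- Let `m ≥ 2`, `t ≥ 1` and `n ≥ mt`, and let `n₁, …, n_m` be nonnegative integers summing to
`n`. Write `n = qm + r` with `0 ≤ r < m`. Then `∏_{i=1}^m C(nᵢ, t) ≤ C(q+1,t)^r C(q,t)^{m-r}`:
the Turán graph maximizes the number of copies of `K_m(t)` among complete multipartite graphs
on `n` vertices with at most `m` parts. -/
theorem turan_graph_maximizes_blowups (m t n q r : ℕ) (hm : 2 ≤ m) (ht : 1 ≤ t)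
    (hn : m * t ≤ n) (f : Fin m → ℕ) (hsum : ∑ i : Fin m, f i = n)
    (hqr : n = q * m + r) (hr : r < m) :
    ∏ i : Fin m, (f i).choose t ≤ (q + 1).choose t ^ r * q.choose t ^ (m - r) := by
  have htq : t ≤ q := by
    by_contra! h
    nlinarith [Nat.mul_le_mul_left m (Nat.succ_le_of_lt h)]
  have ha : 0 < q.choose t := Nat.choose_pos htq
  have hb : 0 < (q + 1).choose t := Nat.choose_pos (by omega)
  have key := Finset.prod_le_prod' fun i (_ : i ∈ Finset.univ) => choose_tangent_bound t q (f i)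
  simp only [Finset.prod_mul_distrib, Finset.prod_pow_eq_pow_sum, hsum, Finset.prod_const,
    Finset.card_univ, Fintype.card_fin, Finset.sum_const, smul_eq_mul, mul_comm m q] at key
  generalize (q + 1).choose t = b at *
  generalize q.choose t = a at *
  obtain ⟨s, rfl⟩ := Nat.exists_eq_add_of_le hr.le
  rw [Nat.add_sub_cancel_left]
  set Q := q * (r + s)
  rw [hqr] at key
  refine Nat.le_of_mul_le_mul_right (c := a ^ (Q + r) * b ^ Q) ?_ (by positivity)
  calc _ ≤ _ := key
    _ = _ := by ring
end

section
/- For all integers m ≥ 3 and t ≥ 1, the following strict inequality holds: (3/(3m−1))^{t−1} · (1 − 3/(3m−1))^{t(m−1)} < (1/m^{t−1}) · ((m−1)/m)^{t(m−1)}. -/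
/-!
Write `u = 3/(3m-1)`, `q = 1 - u`, `w = (m-1)/m` and `x = 1/(3m-1)`, so that `u = (1 + x)/m`.
Since `w = q (1 + δ)` with `δ = 1/(m(3m-4))`, Bernoulli's inequality gives
`w^(m-1) ≥ q^(m-1) (1 + (m-1)δ) ≥ q^(m-1) (1 + x)`, which is `key_bernoulli`.
Hence `q^(m-1) < w^(m-1)` and `u q^(m-1) ≤ (1/m) w^(m-1)`. The theorem is the product of the first
inequality with the `(t-1)`-st power of the second.
-/

lemma key_bernoulli (m : ℕ) (hm : 3 ≤ m) :
    (1 - 3 / (3 * (m : ℝ) - 1)) ^ (m - 1) * (1 + 1 / (3 * (m : ℝ) - 1))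
      ≤ (((m : ℝ) - 1) / (m : ℝ)) ^ (m - 1) := by
  have h3 : (3 : ℝ) ≤ m := by exact_mod_cast hm
  have h0 : (0 : ℝ) < m := by linarith
  have h1 : (0 : ℝ) < 3 * m - 1 := by linarith
  have h4 : (0 : ℝ) < 3 * m - 4 := by linarith
  have hδ : (0 : ℝ) < 1 / (m * (3 * m - 4)) := by positivity
  have hq : 1 - 3 / (3 * (m : ℝ) - 1) = (3 * m - 4) / (3 * m - 1) := by
    field_simp
    ring
  have hw : ((m : ℝ) - 1) / m
      = (1 - 3 / (3 * (m : ℝ) - 1)) * (1 + 1 / (m * (3 * m - 4))) := by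
    rw [hq, one_add_div (by positivity), div_mul_div_comm, div_eq_div_iff h0.ne' (by positivity)]
    ring
  have hB := one_add_mul_le_pow (a := 1 / ((m : ℝ) * (3 * m - 4))) (by linarith) (m - 1)
  have hx : 1 / (3 * (m : ℝ) - 1) ≤ ((m - 1 : ℕ) : ℝ) * (1 / (m * (3 * m - 4))) := by
    rw [Nat.cast_sub (by omega), Nat.cast_one, mul_one_div, div_le_div_iff₀ h1 (by positivity)]
    nlinarith
  rw [hw, mul_pow]
  refine mul_le_mul_of_nonneg_left (by linarith) (pow_nonneg ?_ _)
  rw [hq]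
  positivity

/-- For all integers `m ≥ 3` and `t ≥ 1`,
`(3/(3m-1))^{t-1} (1 - 3/(3m-1))^{t(m-1)} < (1/m^{t-1}) ((m-1)/m)^{t(m-1)}`. -/
theorem blowup_degree_inequality (m t : ℕ) (hm : 3 ≤ m) (ht : 1 ≤ t) :
    ((3 : ℝ) / (3 * (m : ℝ) - 1)) ^ (t - 1) *
        (1 - 3 / (3 * (m : ℝ) - 1)) ^ (t * (m - 1))
      < (1 / (m : ℝ) ^ (t - 1)) * (((m : ℝ) - 1) / (m : ℝ)) ^ (t * (m - 1)) := by
  obtain ⟨s, rfl⟩ : ∃ s, t = s + 1 := ⟨t - 1, by omega⟩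
  have hK := key_bernoulli m hm
  have h3 : (3 : ℝ) ≤ m := by exact_mod_cast hm
  have h0 : (0 : ℝ) < m := by linarith
  have h1 : (0 : ℝ) < 3 * m - 1 := by linarith
  have hq : 0 < 1 - 3 / (3 * (m : ℝ) - 1) := by
    rw [sub_pos, div_lt_one h1]
    linarith
  have hu : 3 / (3 * (m : ℝ) - 1) = 1 / m * (1 + 1 / (3 * (m : ℝ) - 1)) := by
    field_simp
    ring
  have hx : 0 < 1 / (3 * (m : ℝ) - 1) := by positivity
  have hQ : 0 < (1 - 3 / (3 * (m : ℝ) - 1)) ^ (m - 1) := pow_pos hq _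
  have hu0 : 0 < 3 / (3 * (m : ℝ) - 1) := by positivity
  rw [Nat.add_sub_cancel, mul_comm (s + 1), pow_mul, pow_mul, ← one_div_pow]
  generalize (1 - 3 / (3 * (m : ℝ) - 1)) ^ (m - 1) = Q at *
  generalize (((m : ℝ) - 1) / (m : ℝ)) ^ (m - 1) = W at *
  have hQW : Q < W := by nlinarith
  have hle : 3 / (3 * (m : ℝ) - 1) * Q ≤ 1 / m * W := by
    rw [hu, mul_assoc, mul_comm _ Q]
    exact mul_le_mul_of_nonneg_left hK (by positivity)
  have hpow := pow_le_pow_left₀ (by positivity) hle s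
  have hW : 0 < W := hQ.trans hQW
  calc (3 / (3 * (m : ℝ) - 1)) ^ s * Q ^ (s + 1)
      = (3 / (3 * (m : ℝ) - 1) * Q) ^ s * Q := by rw [mul_pow]; ring
    _ < (3 / (3 * (m : ℝ) - 1) * Q) ^ s * W := mul_lt_mul_of_pos_left hQW (by positivity)
    _ ≤ (1 / m * W) ^ s * W := mul_le_mul_of_nonneg_right hpow hW.le
    _ = (1 / (m : ℝ)) ^ s * W ^ (s + 1) := by rw [mul_pow]; ring
end
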